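/- arXiv:1904.07713 — 2 statements merged into one kernel-verified Lean document; each statement's English description precedes it below -/
import Mathlib

section
/- For every n ≥ 1 there exists a smooth function w : ℝⁿ → ℝ with 0 < D²w(x) < I for all x ∈ ℝⁿ (i.e. all eigenvalues of D²w(x) lie in (0,1)), satisfying Σ_{i=1}^n ln( λ_i(D²w(x)) / (1 − λ_i(D²w(x))) ) = −w(x) + (1/2)⟨x, Dw(x)⟩ for all x ∈ ℝⁿ, such that w is NOT a quadratic polynomial. -/
open Real Filter Matrix
open scoped RealInnerProductSpace

noncomputable section

/-- The Hessian matrix of `u` at `x`, with entries the second iterated derivatives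
in the coordinate directions. -/
def Hess (n : ℕ) (u : EuclideanSpace ℝ (Fin n) → ℝ) (x : EuclideanSpace ℝ (Fin n)) :
    Matrix (Fin n) (Fin n) ℝ :=
  Matrix.of fun i j =>
    iteratedFDeriv ℝ 2 u x ![EuclideanSpace.single i 1, EuclideanSpace.single j 1]

open Classical in
/-- The eigenvalues of a real symmetric matrix (junk value `0` if not symmetric). -/
def eigs {n : ℕ} (A : Matrix (Fin n) (Fin n) ℝ) : Fin n → ℝ :=
  if h : A.IsHermitian then h.eigenvalues else 0

/-- `u` is a quadratic polynomial:
`u x = (1/2)⟨x, A x⟩ + ⟨β, x⟩ + c` with `A` symmetric. -/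
def IsQuadPoly (n : ℕ) (u : EuclideanSpace ℝ (Fin n) → ℝ) : Prop :=
  ∃ (A : Matrix (Fin n) (Fin n) ℝ) (β : EuclideanSpace ℝ (Fin n)) (c : ℝ), A.IsSymm ∧
    ∀ x, u x = (1/2) * (∑ i, ∑ j, A i j * x i * x j) + ⟪β, x⟫ + c

/-!
A separable function `w x = ∑ i, f (x i)` has Hessian `diag (f'' (x i))`, so the equation decouples
into one copy per coordinate of `log (f'' / (1 - f'')) = -f + t f' / 2`. Inverting the log-odds
turns this into the second-order equation `f'' = σ (-f + t f' / 2)` with `σ` the sigmoid, which also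
forces `0 < f'' < 1`.

The right-hand side is bounded and is Lipschitz in `(f, f')` locally uniformly in time. The
first-order system for `(f, f')` is unbounded because of its free part `f' = p`, but conjugating by
the free flow `(x, v) ↦ (x + s v, v)` leaves a field that is bounded on compact time intervals, to
which Picard-Lindelöf applies on intervals of any length. If a solution were `a t² + b t + c`, then
`σ (-c - b t / 2)` would be constant, so `b = 0`; starting from `f' 0 = 1` excludes this.
-/

open Function Metric
open scoped NNReal

section IntegralCurves

variable {E : Type*} [NormedAddCommGroup E] [NormedSpace ℝ E]
  {v : ℝ → E → E} {γ γ₁ γ₂ : ℝ → E} {x₀ : E} {t₀ : ℝ}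

theorem eqOn_ball_of_isIntegralCurveOn {K : ℝ≥0} {R : ℝ}
    (hlip : ∀ t ∈ ball t₀ R, LipschitzWith K (v t))
    (h₁ : IsIntegralCurveOn γ₁ v (ball t₀ R)) (h₂ : IsIntegralCurveOn γ₂ v (ball t₀ R))
    (h₀ : γ₁ t₀ = γ₂ t₀) : Set.EqOn γ₁ γ₂ (ball t₀ R) := by
  intro t ht
  have hmem : t₀ ∈ ball t₀ R := mem_ball_self (pos_of_mem_ball ht)
  have hasDerivAt {γ : ℝ → E} (h : IsIntegralCurveOn γ v (ball t₀ R)) :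
      ∀ s ∈ ball t₀ R, HasDerivAt γ (v s (γ s)) s ∧ γ s ∈ Set.univ := fun s hs =>
    ⟨(h s hs).hasDerivAt (isOpen_ball.mem_nhds hs), Set.mem_univ _⟩
  rw [Real.ball_eq_Ioo] at *
  exact ODE_solution_unique_of_mem_Ioo (fun s hs => (hlip s hs).lipschitzOnWith) hmem
    (hasDerivAt h₁) (hasDerivAt h₂) h₀ ht

theorem exists_isIntegralCurve_of_forall_ball
    (hlip : ∀ R : ℝ≥0, ∃ K : ℝ≥0, ∀ t ∈ ball t₀ R, LipschitzWith K (v t))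
    (hloc : ∀ R : ℝ≥0, ∃ γ : ℝ → E, γ t₀ = x₀ ∧ IsIntegralCurveOn γ v (ball t₀ R)) :
    ∃ γ : ℝ → E, γ t₀ = x₀ ∧ IsIntegralCurve γ v := by
  choose β hβ₀ hβ using hloc
  let glued : ℝ → E := fun t => β (nndist t t₀ + 1) t
  have mem_ball_glued (t : ℝ) : t ∈ ball t₀ (nndist t t₀ + 1 : ℝ≥0) := by
    simp
  have eqOn_min (R S : ℝ≥0) : Set.EqOn (β R) (β S) (ball t₀ (min R S : ℝ≥0)) := by
    obtain ⟨K, hK⟩ := hlip (min R S)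
    exact eqOn_ball_of_isIntegralCurveOn hK
      ((hβ R).mono (ball_subset_ball (NNReal.coe_le_coe.2 (min_le_left R S))))
      ((hβ S).mono (ball_subset_ball (NNReal.coe_le_coe.2 (min_le_right R S))))
      ((hβ₀ R).trans (hβ₀ S).symm)
  have glued_eqOn (S : ℝ≥0) : Set.EqOn glued (β S) (ball t₀ S) := fun t ht =>
    eqOn_min _ S (mem_ball.2 (by
      rw [NNReal.coe_min]
      exact lt_min (mem_ball_glued t) ht))
  refine ⟨glued, hβ₀ _, fun t => ?_⟩
  have hnhds := isOpen_ball.mem_nhds (mem_ball_glued t)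
  exact ((hβ _ t (mem_ball_glued t)).hasDerivAt hnhds).congr_of_eventuallyEq
    ((glued_eqOn _).eventuallyEq_of_mem hnhds)

variable [CompleteSpace E]

theorem exists_isIntegralCurveOn_closedBall_of_bounded {K C R : ℝ≥0}
    (hcont : ∀ x, ContinuousOn (v · x) (closedBall t₀ R))
    (hlip : ∀ t ∈ closedBall t₀ (R : ℝ), LipschitzWith K (v t))
    (hbdd : ∀ t ∈ closedBall t₀ (R : ℝ), ∀ x, ‖v t x‖ ≤ C) (x₀ : E) :
    ∃ γ : ℝ → E, γ t₀ = x₀ ∧ IsIntegralCurveOn γ v (closedBall t₀ R) := by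
  have hmem : t₀ ∈ closedBall t₀ (R : ℝ) := mem_closedBall_self R.coe_nonneg
  rw [Real.closedBall_eq_Icc] at *
  have hv : IsPicardLindelof v ⟨t₀, hmem⟩ x₀ (C * R) 0 C K :=
    { lipschitzOnWith := fun t ht => (hlip t ht).lipschitzOnWith
      continuousOn := fun x _ => hcont x
      norm_le := fun t ht x _ => hbdd t ht x
      mul_max_le := by simp }
  exact hv.exists_eq_forall_mem_Icc_hasDerivWithinAt₀

theorem exists_isIntegralCurve_of_bounded
    (hcont : ∀ x, Continuous (v · x))
    (hlip : ∀ R : ℝ≥0, ∃ K : ℝ≥0, ∀ t ∈ closedBall t₀ (R : ℝ), LipschitzWith K (v t))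
    (hbdd : ∀ R : ℝ≥0, ∃ C : ℝ≥0, ∀ t ∈ closedBall t₀ (R : ℝ), ∀ x, ‖v t x‖ ≤ C) (x₀ : E) :
    ∃ γ : ℝ → E, γ t₀ = x₀ ∧ IsIntegralCurve γ v := by
  refine exists_isIntegralCurve_of_forall_ball
    (fun R => (hlip R).imp fun _ hK t ht => hK t (ball_subset_closedBall ht)) fun R => ?_
  obtain ⟨K, hK⟩ := hlip R
  obtain ⟨C, hC⟩ := hbdd R
  obtain ⟨γ, hγ₀, hγ⟩ :=
    exists_isIntegralCurveOn_closedBall_of_bounded (fun x => (hcont x).continuousOn) hK hC x₀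
  exact ⟨γ, hγ₀, hγ.mono ball_subset_closedBall⟩

theorem contDiff_of_isIntegralCurve {n : ℕ∞} (hv : ContDiff ℝ n (uncurry v))
    (hγ : IsIntegralCurve γ v) : ContDiff ℝ n γ :=
  contDiff_iff_contDiffAt.2 fun t =>
    (ODE.contDiffOn_enat_Icc_of_hasDerivWithinAt hv.contDiffOn (hγ.isIntegralCurveOn _)
      (Set.mapsTo_univ _ _)).contDiffAt (Icc_mem_nhds (sub_one_lt t) (lt_add_one t))

end IntegralCurves

section SecondOrder

variable {E : Type*} [NormedAddCommGroup E] [NormedSpace ℝ E]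

/-- The flow `(x, v) ↦ (x + s v, v)` of the free equation `x'' = 0` on phase space, used to remove
the unbounded free part of a second-order equation. -/
def freeFlow (s : ℝ) : E × E →L[ℝ] E × E :=
  .id ℝ (E × E) + s • (ContinuousLinearMap.inl ℝ E E).comp (ContinuousLinearMap.snd ℝ E E)

lemma freeFlow_apply (s : ℝ) (y : E × E) : freeFlow s y = (y.1 + s • y.2, y.2) := by
  ext <;> simp [freeFlow]

lemma freeFlow_zero (y : E × E) : freeFlow 0 y = y := by
  simp [freeFlow_apply]

lemma nnnorm_freeFlow_le (s : ℝ) : ‖(freeFlow s : E × E →L[ℝ] E × E)‖₊ ≤ 1 + ‖s‖₊ := by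
  have hcomp : ‖(ContinuousLinearMap.inl ℝ E E).comp (ContinuousLinearMap.snd ℝ E E)‖ ≤ 1 :=
    ((ContinuousLinearMap.inl ℝ E E).opNorm_comp_le _).trans
      (mul_le_one₀ (ContinuousLinearMap.norm_inl_le_one ℝ E E) (norm_nonneg _)
        (ContinuousLinearMap.norm_snd_le ℝ E E))
  refine (nnnorm_add_le _ _).trans (add_le_add ContinuousLinearMap.norm_id_le ?_)
  rw [nnnorm_smul]
  exact mul_le_of_le_one_right' hcomp

lemma lipschitzWith_freeFlow (s : ℝ) :
    LipschitzWith (1 + ‖s‖₊) (freeFlow s : E × E →L[ℝ] E × E) :=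
  (freeFlow (E := E) s).lipschitz.weaken (nnnorm_freeFlow_le s)

lemma continuous_freeFlow_apply {X : Type*} [TopologicalSpace X] {s : X → ℝ} {y : X → E × E}
    (hs : Continuous s) (hy : Continuous y) : Continuous fun x => freeFlow (s x) (y x) := by
  simp only [freeFlow_apply]
  fun_prop

/-- The acceleration `G`, seen as a vector field on phase space, in the frame moving with the free
flow started at time `t₀`; unlike the field `(x, v) ↦ (v, G t (x, v))`, it is bounded when `G t`
is. -/
def movingFrameField (G : ℝ → E × E → E) (t₀ t : ℝ) (y : E × E) : E × E :=
  freeFlow (t₀ - t) (0, G t (freeFlow (t - t₀) y))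

variable {G : ℝ → E × E → E} {t₀ : ℝ}

lemma isIntegralCurve_freeFlow {α : ℝ → E × E}
    (hα : IsIntegralCurve α (movingFrameField G t₀)) :
    IsIntegralCurve (fun t => freeFlow (t - t₀) (α t)) fun t y => (y.2, G t y) := by
  intro t
  have hx : HasDerivAt (fun s => (α s).1) (movingFrameField G t₀ t (α t)).1 t :=
    (ContinuousLinearMap.fst ℝ E E).hasFDerivAt.comp_hasDerivAt t (hα t)
  have hv : HasDerivAt (fun s => (α s).2) (movingFrameField G t₀ t (α t)).2 t :=
    (ContinuousLinearMap.snd ℝ E E).hasFDerivAt.comp_hasDerivAt t (hα t)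
  have hdrift := ((hasDerivAt_id t).sub_const t₀).smul hv
  simp only [freeFlow_apply]
  refine ((hx.add hdrift).prodMk hv).congr_deriv ?_
  ext
  · simp only [movingFrameField, freeFlow_apply, id]
    module
  · simp [movingFrameField, freeFlow_apply]

lemma continuous_movingFrameField_apply (hG : Continuous (uncurry G)) (y : E × E) :
    Continuous (movingFrameField G t₀ · y) := by
  have hflow : Continuous fun t => freeFlow (t - t₀) y :=
    continuous_freeFlow_apply (continuous_id.sub continuous_const) continuous_const
  exact continuous_freeFlow_apply (continuous_const.sub continuous_id)
    (continuous_const.prodMk (hG.comp (continuous_id.prodMk hflow)))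

lemma lipschitzWith_movingFrameField {K : ℝ≥0} {t : ℝ} (hlip : LipschitzWith K (G t)) :
    LipschitzWith ((1 + nndist t t₀) * (K * (1 + nndist t t₀))) (movingFrameField G t₀ t) := by
  have hforth := lipschitzWith_freeFlow (E := E) (t - t₀)
  have hback := lipschitzWith_freeFlow (E := E) (t₀ - t)
  rw [← nndist_eq_nnnorm] at hforth
  rw [← nndist_eq_nnnorm, nndist_comm] at hback
  have hlift := (LipschitzWith.prodMk_left (0 : E)).comp (hlip.comp hforth)
  rw [one_mul] at hlift
  exact hback.comp hlift

lemma norm_movingFrameField_le {C : ℝ≥0} {t : ℝ} (hbdd : ∀ y, ‖G t y‖ ≤ C) (y : E × E) :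
    ‖movingFrameField G t₀ t y‖ ≤ (1 + nndist t t₀) * C := by
  have hlift : ‖((0 : E), G t (freeFlow (t - t₀) y))‖ ≤ C := by
    simpa [Prod.norm_mk] using hbdd _
  have hback := nnnorm_freeFlow_le (E := E) (t₀ - t)
  rw [← nndist_eq_nnnorm, nndist_comm] at hback
  exact (freeFlow (E := E) (t₀ - t)).le_of_opNorm_le_of_le (NNReal.coe_le_coe.2 hback) hlift

theorem exists_isIntegralCurve_secondOrder [CompleteSpace E]
    (hcont : Continuous (uncurry G))
    (hlip : ∀ R : ℝ≥0, ∃ K : ℝ≥0, ∀ t ∈ closedBall t₀ (R : ℝ), LipschitzWith K (G t))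
    (hbdd : ∀ R : ℝ≥0, ∃ C : ℝ≥0, ∀ t ∈ closedBall t₀ (R : ℝ), ∀ y, ‖G t y‖ ≤ C) (y₀ : E × E) :
    ∃ γ : ℝ → E × E, γ t₀ = y₀ ∧ IsIntegralCurve γ fun t y => (y.2, G t y) := by
  obtain ⟨α, hα₀, hα⟩ : ∃ α, α t₀ = y₀ ∧ IsIntegralCurve α (movingFrameField G t₀) := by
    refine exists_isIntegralCurve_of_bounded (continuous_movingFrameField_apply hcont)
      (fun R => ?_) (fun R => ?_) y₀
    · obtain ⟨K, hK⟩ := hlip R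
      refine ⟨(1 + R) * (K * (1 + R)), fun t ht =>
        (lipschitzWith_movingFrameField (hK t ht)).weaken ?_⟩
      have htR : nndist t t₀ ≤ R := mem_closedBall.1 ht
      gcongr
    · obtain ⟨C, hC⟩ := hbdd R
      refine ⟨(1 + R) * C, fun t ht y => (norm_movingFrameField_le (hC t ht) y).trans ?_⟩
      have htR : nndist t t₀ ≤ R := mem_closedBall.1 ht
      exact_mod_cast mul_le_mul_left (add_le_add_right htR 1) C
  exact ⟨_, by simp [freeFlow_zero, hα₀], isIntegralCurve_freeFlow hα⟩

end SecondOrder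

section Sigmoid

lemma lipschitzWith_sigmoid : LipschitzWith 1 sigmoid := by
  refine lipschitzWith_of_nnnorm_deriv_le differentiable_sigmoid fun x => ?_
  have hpos := sigmoid_pos x
  have hlt := sigmoid_lt_one x
  rw [← NNReal.coe_le_coe, coe_nnnorm, deriv_sigmoid, NNReal.coe_one,
    Real.norm_of_nonneg (mul_nonneg hpos.le (sub_nonneg.2 hlt.le))]
  nlinarith

lemma log_sigmoid_div_one_sub_sigmoid (x : ℝ) : log (sigmoid x / (1 - sigmoid x)) = x := by
  rw [← sigmoid_neg, ← sigmoid_mul_rexp_neg, div_mul_cancel_left₀ (sigmoid_pos x).ne',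
    exp_neg, inv_inv, log_exp]

end Sigmoid

section Profile

/-- `f` is a smooth solution on `ℝ` of the one-dimensional equation
`log (f'' / (1 - f'')) = -f + t f' / 2`, solved for `f''`. -/
structure IsProfile (f : ℝ → ℝ) : Prop where
  contDiff : ContDiff ℝ (⊤ : ℕ∞) f
  deriv_deriv (t : ℝ) : deriv (deriv f) t = sigmoid (-f t + t * deriv f t / 2)

lemma lipschitzWith_sigmoid_profile (t : ℝ) :
    LipschitzWith (1 + ‖t‖₊ / 2) fun y : ℝ × ℝ => sigmoid (-y.1 + t * y.2 / 2) := by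
  refine LipschitzWith.of_dist_le_mul fun x y => ?_
  have hfst : |x.1 - y.1| ≤ dist x y := (Real.dist_eq _ _).symm.trans_le (le_max_left _ _)
  have hsnd : |x.2 - y.2| ≤ dist x y := (Real.dist_eq _ _).symm.trans_le (le_max_right _ _)
  calc dist (sigmoid (-x.1 + t * x.2 / 2)) (sigmoid (-y.1 + t * y.2 / 2))
    _ ≤ |(-x.1 + t * x.2 / 2) - (-y.1 + t * y.2 / 2)| := by
      simpa [Real.dist_eq] using lipschitzWith_sigmoid.dist_le_mul _ _
    _ = |t / 2 * (x.2 - y.2) - (x.1 - y.1)| := by ring_nf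
    _ ≤ |t / 2 * (x.2 - y.2)| + |x.1 - y.1| := abs_sub _ _
    _ ≤ |t| / 2 * dist x y + dist x y := by
      rw [abs_mul, abs_div, abs_two]
      gcongr
    _ = (1 + ‖t‖₊ / 2 : ℝ≥0) * dist x y := by
      push_cast
      rw [Real.norm_eq_abs]
      ring

lemma exists_isIntegralCurve_profile (y₀ : ℝ × ℝ) : ∃ γ : ℝ → ℝ × ℝ, γ 0 = y₀ ∧
    IsIntegralCurve γ fun t y => (y.2, sigmoid (-y.1 + t * y.2 / 2)) := by
  refine exists_isIntegralCurve_secondOrder (G := fun t y => sigmoid (-y.1 + t * y.2 / 2))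
    ?_ (fun R => ⟨1 + R / 2, fun t ht => ?_⟩) (fun _ => ⟨1, fun t _ y => ?_⟩) y₀
  · have := continuous_sigmoid
    fun_prop
  · have htR : ‖t‖₊ ≤ R := mem_closedBall_zero_iff.1 ht
    exact (lipschitzWith_sigmoid_profile t).weaken (by gcongr)
  · rw [Real.norm_of_nonneg (sigmoid_nonneg _)]
    exact sigmoid_le_one _

theorem exists_isProfile (a b : ℝ) : ∃ f, IsProfile f ∧ f 0 = a ∧ deriv f 0 = b := by
  obtain ⟨γ, hγ₀, hγ⟩ := exists_isIntegralCurve_profile (a, b)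
  have hpos (t : ℝ) : HasDerivAt (fun s => (γ s).1) (γ t).2 t :=
    (ContinuousLinearMap.fst ℝ ℝ ℝ).hasFDerivAt.comp_hasDerivAt t (hγ t)
  have hvel (t : ℝ) : HasDerivAt (fun s => (γ s).2) (sigmoid (-(γ t).1 + t * (γ t).2 / 2)) t :=
    (ContinuousLinearMap.snd ℝ ℝ ℝ).hasFDerivAt.comp_hasDerivAt t (hγ t)
  have hderiv : deriv (fun s => (γ s).1) = fun s => (γ s).2 := funext fun t => (hpos t).deriv
  have hfield : ContDiff ℝ (⊤ : ℕ∞)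
      (uncurry fun t (y : ℝ × ℝ) => (y.2, sigmoid (-y.1 + t * y.2 / 2))) := by
    have hsigmoid : ContDiff ℝ (⊤ : ℕ∞) sigmoid := contDiff_sigmoid.of_le le_top
    fun_prop
  refine ⟨fun s => (γ s).1, ⟨(contDiff_of_isIntegralCurve hfield hγ).fst, fun t => ?_⟩,
    congrArg Prod.fst hγ₀, ?_⟩
  · rw [hderiv, (hvel t).deriv]
  · rw [hderiv]
    exact congrArg Prod.snd hγ₀

lemma IsProfile.deriv_zero_eq_zero_of_quadratic {f : ℝ → ℝ} (hf : IsProfile f) {a b c : ℝ}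
    (hquad : ∀ t, f t = a * t ^ 2 + b * t + c) : deriv f 0 = 0 := by
  have hderiv : deriv f = fun t => 2 * a * t + b := by
    ext t
    rw [funext hquad]
    refine (((((hasDerivAt_pow 2 t).const_mul a).add
      ((hasDerivAt_id t).const_mul b)).add_const c).congr_deriv ?_).deriv
    ring
  have hderiv₂ (t : ℝ) : deriv (deriv f) t = 2 * a := by
    rw [hderiv]
    simp
  have hslope : -f 1 + 1 * deriv f 1 / 2 = -f 0 + 0 * deriv f 0 / 2 :=
    sigmoid_injective <| by rw [← hf.deriv_deriv, ← hf.deriv_deriv, hderiv₂, hderiv₂]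
  simp only [hderiv, hquad] at hslope ⊢
  linarith

end Profile

section Separable

/-- The separable function `x ↦ ∑ i, f i (x i)`. -/
def separableSum {ι : Type*} [Fintype ι] (f : ι → ℝ → ℝ) (x : EuclideanSpace ℝ ι) : ℝ :=
  ∑ i, f i (x i)

variable {ι : Type*} [Fintype ι] {f : ι → ℝ → ℝ}

lemma contDiff_separableSum {n : WithTop ℕ∞} (hf : ∀ i, ContDiff ℝ n (f i)) :
    ContDiff ℝ n (separableSum f) :=
  ContDiff.sum fun i _ => (hf i).comp (EuclideanSpace.proj (𝕜 := ℝ) i).contDiff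

lemma hasFDerivAt_separableSum {x : EuclideanSpace ℝ ι}
    (hf : ∀ i, DifferentiableAt ℝ (f i) (x i)) :
    HasFDerivAt (separableSum f)
      (∑ i, deriv (f i) (x i) • (EuclideanSpace.proj i : EuclideanSpace ℝ ι →L[ℝ] ℝ)) x :=
  HasFDerivAt.fun_sum fun i _ =>
    (hf i).hasDerivAt.comp_hasFDerivAt x (EuclideanSpace.proj (𝕜 := ℝ) i).hasFDerivAt

lemma inner_gradient_separableSum {x : EuclideanSpace ℝ ι}
    (hf : ∀ i, DifferentiableAt ℝ (f i) (x i)) :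
    ⟪x, gradient (separableSum f) x⟫ = ∑ i, x i * deriv (f i) (x i) := by
  rw [inner_gradient_right, (hasFDerivAt_separableSum hf).fderiv]
  simp [mul_comm]

lemma hess_separableSum {n : ℕ} {f : Fin n → ℝ → ℝ} (hf : ∀ i, Differentiable ℝ (f i))
    {x : EuclideanSpace ℝ (Fin n)} (hf' : ∀ i, DifferentiableAt ℝ (deriv (f i)) (x i)) :
    Hess n (separableSum f) x = diagonal fun i => deriv (deriv (f i)) (x i) := by
  have hfderiv : fderiv ℝ (separableSum f) = fun y => ∑ i, deriv (f i) (y i) •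
      (EuclideanSpace.proj i : EuclideanSpace ℝ (Fin n) →L[ℝ] ℝ) :=
    funext fun y => (hasFDerivAt_separableSum fun i => hf i (y i)).fderiv
  have hfderiv₂ : HasFDerivAt (fderiv ℝ (separableSum f))
      (∑ i, (deriv (deriv (f i)) (x i) •
        (EuclideanSpace.proj i : EuclideanSpace ℝ (Fin n) →L[ℝ] ℝ)).smulRight
        (EuclideanSpace.proj i : EuclideanSpace ℝ (Fin n) →L[ℝ] ℝ)) x := by
    rw [hfderiv]
    refine HasFDerivAt.fun_sum fun i _ => ?_
    have hcoeff : HasFDerivAt (fun y : EuclideanSpace ℝ (Fin n) => deriv (f i) (y i))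
        (deriv (deriv (f i)) (x i) •
          (EuclideanSpace.proj i : EuclideanSpace ℝ (Fin n) →L[ℝ] ℝ)) x :=
      HasDerivAt.comp_hasFDerivAt (f := fun y : EuclideanSpace ℝ (Fin n) => y i) x
        (hf' i).hasDerivAt (EuclideanSpace.proj (𝕜 := ℝ) i).hasFDerivAt
    exact hcoeff.smul_const (EuclideanSpace.proj i : EuclideanSpace ℝ (Fin n) →L[ℝ] ℝ)
  ext i j
  rw [Hess, of_apply, iteratedFDeriv_two_apply, hfderiv₂.fderiv]
  simp [diagonal_apply]

end Separable

lemma sum_comp_eigs_diagonal {M : Type*} [AddCommMonoid M] {n : ℕ} (d : Fin n → ℝ) (g : ℝ → M) :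
    ∑ i, g (eigs (diagonal d) i) = ∑ i, g (d i) := by
  classical
  have hherm : (diagonal d).IsHermitian := isHermitian_diagonal d
  have hroots : Multiset.map hherm.eigenvalues Finset.univ.val = Multiset.map d Finset.univ.val :=
    calc Multiset.map hherm.eigenvalues Finset.univ.val
      _ = (diagonal d).charpoly.roots := hherm.roots_charpoly_eq_eigenvalues.symm
      _ = (Multiset.map (fun a => Polynomial.X - Polynomial.C a)
            (Multiset.map d Finset.univ.val)).prod.roots := by
        rw [charpoly_diagonal, Multiset.map_map]
        rfl
      _ = Multiset.map d Finset.univ.val := Polynomial.roots_multiset_prod_X_sub_C _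
  have hsum := congrArg (fun s => (Multiset.map g s).sum) hroots
  rw [eigs, dif_pos hherm]
  simpa only [Multiset.map_map, Function.comp_def] using! hsum

lemma IsQuadPoly.exists_eq_on_line {n : ℕ} {u : EuclideanSpace ℝ (Fin n) → ℝ}
    (hu : IsQuadPoly n u) (v : EuclideanSpace ℝ (Fin n)) :
    ∃ a b c : ℝ, ∀ t : ℝ, u (t • v) = a * t ^ 2 + b * t + c := by
  obtain ⟨A, β, c, -, hA⟩ := hu
  refine ⟨1 / 2 * ∑ i, ∑ j, A i j * v i * v j, ⟪β, v⟫, c, fun t => ?_⟩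
  have hquad : ∑ i, ∑ j, A i j * (t • v) i * (t • v) j = (∑ i, ∑ j, A i j * v i * v j) * t ^ 2 := by
    simp only [PiLp.smul_apply, smul_eq_mul, Finset.sum_mul]
    refine Finset.sum_congr rfl fun i _ => Finset.sum_congr rfl fun j _ => ?_
    ring
  rw [hA, hquad, real_inner_smul_right]
  ring

namespace IsProfile

variable {n : ℕ} {f : ℝ → ℝ}

lemma differentiable (hf : IsProfile f) : Differentiable ℝ f :=
  hf.contDiff.differentiable (by simp)

lemma differentiable_deriv (hf : IsProfile f) : Differentiable ℝ (deriv f) :=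
  (contDiff_infty_iff_deriv.1 hf.contDiff).2.differentiable (by simp)

lemma hess_eq_diagonal (hf : IsProfile f) (x : EuclideanSpace ℝ (Fin n)) :
    Hess n (separableSum fun _ => f) x =
      diagonal fun i => sigmoid (-f (x i) + x i * deriv f (x i) / 2) := by
  rw [hess_separableSum (fun _ => hf.differentiable)
    fun i => hf.differentiable_deriv (x i)]
  simp only [hf.deriv_deriv]

theorem posDef_hess (hf : IsProfile f) (x : EuclideanSpace ℝ (Fin n)) :
    (Hess n (separableSum fun _ => f) x).PosDef := by
  rw [hf.hess_eq_diagonal, posDef_diagonal_iff]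
  exact fun i => sigmoid_pos _

theorem posDef_one_sub_hess (hf : IsProfile f) (x : EuclideanSpace ℝ (Fin n)) :
    ((1 : Matrix (Fin n) (Fin n) ℝ) - Hess n (separableSum fun _ => f) x).PosDef := by
  rw [hf.hess_eq_diagonal, ← diagonal_one, diagonal_sub, posDef_diagonal_iff]
  exact fun i => sub_pos.2 (sigmoid_lt_one _)

theorem sum_log_eigs_hess (hf : IsProfile f) (x : EuclideanSpace ℝ (Fin n)) :
    ∑ i, log (eigs (Hess n (separableSum fun _ => f) x) i /
        (1 - eigs (Hess n (separableSum fun _ => f) x) i)) =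
      -separableSum (fun _ => f) x + (1/2) * ⟪x, gradient (separableSum fun _ => f) x⟫ := by
  rw [inner_gradient_separableSum fun i => hf.differentiable (x i), hf.hess_eq_diagonal,
    sum_comp_eigs_diagonal _ fun l => log (l / (1 - l))]
  simp only [log_sigmoid_div_one_sub_sigmoid, separableSum, Finset.sum_add_distrib,
    Finset.sum_neg_distrib, Finset.mul_sum]
  congr! 2
  ring

theorem not_isQuadPoly_separableSum (hf : IsProfile f) (hf₀ : deriv f 0 ≠ 0) (hn : n ≠ 0) :
    ¬ IsQuadPoly n (separableSum fun _ => f) := by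
  intro hquad
  obtain ⟨a, b, c, habc⟩ := hquad.exists_eq_on_line (WithLp.toLp 2 1)
  have hdiag (t : ℝ) : n * f t = a * t ^ 2 + b * t + c := by
    simpa [separableSum] using habc t
  refine hf₀ (hf.deriv_zero_eq_zero_of_quadratic (a := a / n) (b := b / n) (c := c / n) fun t => ?_)
  field_simp
  linarith [hdiag t]

end IsProfile

theorem nonquadratic_solution_exists_normalized (n : ℕ) (hn : 1 ≤ n) :
    ∃ w : EuclideanSpace ℝ (Fin n) → ℝ, ContDiff ℝ (⊤ : ℕ∞) w ∧
      (∀ x, (Hess n w x).PosDef ∧ ((1 : Matrix (Fin n) (Fin n) ℝ) - Hess n w x).PosDef) ∧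
      (∀ x, ∑ i, Real.log (eigs (Hess n w x) i / (1 - eigs (Hess n w x) i))
        = -w x + (1/2) * ⟪x, gradient w x⟫) ∧
      ¬ IsQuadPoly n w := by
  obtain ⟨f, hf, -, hf'⟩ := exists_isProfile 0 1
  refine ⟨separableSum fun _ => f, contDiff_separableSum fun _ => hf.contDiff,
    fun x => ⟨hf.posDef_hess x, hf.posDef_one_sub_hess x⟩, hf.sum_log_eigs_hess, ?_⟩
  exact hf.not_isQuadPoly_separableSum (by simp [hf']) (Nat.one_le_iff_ne_zero.1 hn)
end
end

section
/- Let n ≥ 1, a > 1 and b = √(a² − 1). Let w : ℝⁿ → ℝ be a smooth strictly convex function (M(x) := D²w(x) positive definite for all x) satisfying (√(a²+1)/(2b)) · Σ_{i=1}^n ln( λ_i(D²w(x)) / (λ_i(D²w(x)) + 2b) ) = −w(x) + (1/2)⟨x, Dw(x)⟩ for all x ∈ ℝⁿ. Define the phase φ(x) := −w(x) + (1/2)⟨x, Dw(x)⟩. Then φ(x) < 0 for all x, and φ satisfies the linear elliptic equation √(a²+1) · tr( (M(x)(M(x) + 2bI))^{−1} · D²φ(x) ) − (1/2)⟨x, Dφ(x)⟩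 = 0 for all x ∈ ℝⁿ. -/
open Real Filter Matrix
open scoped RealInnerProductSpace

noncomputable section

/-!
Write `M = D²w`, `c = 2b`, `κ = √(a² + 1)`. Negativity holds termwise, since `λ / (λ + c) < 1`
for `λ > 0`. For the elliptic equation, the product formula for the determinant turns the
equation for `w` into `φ = κ/c (log det M - log det (M + c I))`; differentiate both sides along the
ray `t ↦ t x` at `t = 1`. For `φ = -w + ½⟨x, Dw⟩` each of two differentiations contributes `½` to
the coefficient of the zeroth-order term, which therefore vanishes in `D²φ = ½ D³w(x)`; hence `M`
moves with velocity `2 D²φ` along the ray. Jacobi's formula and the resolvent identity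
`M⁻¹ - (M + c I)⁻¹ = c (M (M + c I))⁻¹` finish the proof.
-/

section MatrixCalculus

variable {m : Type*} [Fintype m] [DecidableEq m]

lemma det_add_smul_one_eq_prod_eigenvalues_add {𝕜 : Type*} [RCLike 𝕜] {A : Matrix m m 𝕜}
    (hA : A.IsHermitian) (c : 𝕜) :
    (A + c • (1 : Matrix m m 𝕜)).det = ∏ i, ((hA.eigenvalues i : 𝕜) + c) := by
  have hneg : A + c • (1 : Matrix m m 𝕜) = -(Matrix.scalar m (-c) - A) := by
    rw [Matrix.scalar_apply, ← Matrix.smul_one_eq_diagonal, neg_smul]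
    abel
  rw [hneg, Matrix.det_neg, ← Matrix.eval_charpoly, hA.charpoly_eq, Polynomial.eval_prod,
    ← Finset.card_univ, ← Finset.prod_const, ← Finset.prod_mul_distrib]
  refine Finset.prod_congr rfl fun i _ => ?_
  rw [Polynomial.eval_sub, Polynomial.eval_X, Polynomial.eval_C]
  ring

lemma trace_adjugate_mul_eq_sum_det_updateRow {R : Type*} [CommRing R] (A B : Matrix m m R) :
    (A.adjugate * B).trace = ∑ i, (A.updateRow i (B i)).det := by
  rw [Matrix.trace_mul_comm]
  refine Finset.sum_congr rfl fun i _ => ?_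
  rw [← Matrix.cramer_transpose_apply, Matrix.cramer_eq_adjugate_mulVec,
    ← Matrix.adjugate_transpose, Matrix.mulVec_transpose, Matrix.diag_apply,
    Matrix.mul_apply_eq_vecMul]

lemma hasDerivAt_det {𝕜 : Type*} [NontriviallyNormedField 𝕜] {M : 𝕜 → Matrix m m 𝕜}
    {M' : Matrix m m 𝕜} {t : 𝕜} (hM : ∀ i j, HasDerivAt (fun s => M s i j) (M' i j) t) :
    HasDerivAt (fun s => (M s).det) ((M t).adjugate * M').trace t := by
  let detMultilinear : ContinuousMultilinearMap 𝕜 (fun _ : m => m → 𝕜) 𝕜 :=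
    ⟨(Matrix.detRowAlternating (R := 𝕜) (n := m)).toMultilinearMap, continuous_id.matrix_det⟩
  have hrows : HasDerivAt (fun s i => M s i) (fun i => M' i) t :=
    hasDerivAt_pi.2 fun i => hasDerivAt_pi.2 (hM i)
  refine ((detMultilinear.hasFDerivAt fun i => M t i).comp_hasDerivAt t hrows).congr_deriv ?_
  rw [trace_adjugate_mul_eq_sum_det_updateRow]
  exact detMultilinear.linearDeriv_apply _ _

lemma hasDerivAt_log_det {M : ℝ → Matrix m m ℝ} {M' : Matrix m m ℝ} {t : ℝ}
    (hM : ∀ i j, HasDerivAt (fun s => M s i j) (M' i j) t) (hdet : (M t).det ≠ 0) :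
    HasDerivAt (fun s => log (M s).det) ((M t)⁻¹ * M').trace t := by
  refine ((hasDerivAt_det hM).log hdet).congr_deriv ?_
  rw [Matrix.inv_def, Ring.inverse_eq_inv', Matrix.smul_mul, Matrix.trace_smul, smul_eq_mul,
    div_eq_inv_mul]

lemma inv_sub_inv_add_smul_one {K : Type*} [Field K] {A : Matrix m m K} {c : K}
    (hA : A.det ≠ 0) (hAc : (A + c • (1 : Matrix m m K)).det ≠ 0) :
    A⁻¹ - (A + c • (1 : Matrix m m K))⁻¹ = c • (A * (A + c • (1 : Matrix m m K)))⁻¹ := by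
  have hunit : IsUnit A ↔ IsUnit (A + c • (1 : Matrix m m K)) := by
    simp only [Matrix.isUnit_iff_isUnit_det, isUnit_iff_ne_zero, ne_eq, hA, hAc, not_false_iff]
  have hcomm : A * (A + c • (1 : Matrix m m K)) = (A + c • (1 : Matrix m m K)) * A := by
    simp only [mul_add, add_mul, Matrix.mul_smul, Matrix.smul_mul, mul_one, one_mul]
  rw [Matrix.inv_sub_inv hunit, add_sub_cancel_left, Matrix.mul_smul, mul_one, Matrix.smul_mul,
    hcomm, Matrix.mul_inv_rev]

lemma hasDerivAt_log_det_sub_log_det_add_smul_one {M : ℝ → Matrix m m ℝ} {M' : Matrix m m ℝ}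
    {t c : ℝ} (hM : ∀ i j, HasDerivAt (fun s => M s i j) (M' i j) t) (hdet : (M t).det ≠ 0)
    (hdetc : (M t + c • (1 : Matrix m m ℝ)).det ≠ 0) :
    HasDerivAt (fun s => log (M s).det - log (M s + c • (1 : Matrix m m ℝ)).det)
      (c * ((M t * (M t + c • (1 : Matrix m m ℝ)))⁻¹ * M').trace) t := by
  have hMc : ∀ i j, HasDerivAt (fun s => (M s + c • (1 : Matrix m m ℝ)) i j) (M' i j) t :=
    fun i j => (hM i j).add_const _
  refine ((hasDerivAt_log_det hM hdet).sub (hasDerivAt_log_det hMc hdetc)).congr_deriv ?_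
  rw [← Matrix.trace_sub, ← Matrix.sub_mul, inv_sub_inv_add_smul_one hdet hdetc, Matrix.smul_mul,
    Matrix.trace_smul, smul_eq_mul]

end MatrixCalculus

section Eigenvalues

variable {n : ℕ} {A : Matrix (Fin n) (Fin n) ℝ}

lemma eigs_eq_eigenvalues (hA : A.IsHermitian) : eigs A = hA.eigenvalues :=
  dif_pos hA

lemma eigs_pos (hA : A.PosDef) (i : Fin n) : 0 < eigs A i := by
  rw [eigs_eq_eigenvalues hA.isHermitian]
  exact hA.eigenvalues_pos i

lemma sum_log_eigs_div_add (hA : A.PosDef) {c : ℝ} (hc : 0 ≤ c) :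
    ∑ i, log (eigs A i / (eigs A i + c))
      = log A.det - log (A + c • (1 : Matrix (Fin n) (Fin n) ℝ)).det := by
  have hdet : ∀ s : ℝ, (A + s • (1 : Matrix (Fin n) (Fin n) ℝ)).det = ∏ i, (eigs A i + s) := by
    rw [eigs_eq_eigenvalues hA.isHermitian]
    exact det_add_smul_one_eq_prod_eigenvalues_add hA.isHermitian
  have hdet_zero : A.det = ∏ i, eigs A i := by simpa using hdet 0
  have hpos : ∀ i, 0 < eigs A i := eigs_pos hA
  have hposc : ∀ i, 0 < eigs A i + c := fun i => add_pos_of_pos_of_nonneg (hpos i) hc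
  rw [hdet_zero, hdet c, log_prod fun i _ => (hpos i).ne', log_prod fun i _ => (hposc i).ne',
    ← Finset.sum_sub_distrib]
  exact Finset.sum_congr rfl fun i _ => log_div (hpos i).ne' (hposc i).ne'

end Eigenvalues

lemma sum_log_div_add_neg {ι : Type*} [Fintype ι] [Nonempty ι] {l : ι → ℝ} (hl : ∀ i, 0 < l i)
    {c : ℝ} (hc : 0 < c) : ∑ i, log (l i / (l i + c)) < 0 := by
  refine Finset.sum_neg (fun i _ => ?_) Finset.univ_nonempty
  have hlc : 0 < l i + c := add_pos (hl i) hc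
  exact log_neg (div_pos (hl i) hlc) ((div_lt_one hlc).2 (lt_add_of_pos_right _ hc))

section Phase

variable {E F : Type*} [NormedAddCommGroup E] [NormedSpace ℝ E] [NormedAddCommGroup F]
  [NormedSpace ℝ F]

lemma hasDerivAt_comp_ray {f : E → F} {x : E} (hf : DifferentiableAt ℝ f x) :
    HasDerivAt (fun t : ℝ => f (t • x)) (fderiv ℝ f x x) 1 := by
  have hray : HasDerivAt (fun t : ℝ => t • x) x 1 := by
    simpa using (hasDerivAt_id (1 : ℝ)).smul_const x
  exact hf.hasFDerivAt.comp_hasDerivAt_of_eq 1 hray (one_smul ℝ x).symm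

/-- The phase `-w + ½⟨x, Dw⟩` of a potential `w`; the pairing `⟨x, Dw(x)⟩` is written as the
derivative of `w` at `x` applied to `x`, so that no inner product is needed. -/
def phase (w : E → F) (x : E) : F :=
  -w x + (1 / 2 : ℝ) • fderiv ℝ w x x

variable {w : E → F}

lemma hasFDerivAt_phase (hw : ContDiff ℝ 2 w) (x : E) :
    HasFDerivAt (phase w) (phase (fderiv ℝ w) x + (1 / 2 : ℝ) • fderiv ℝ w x) x := by
  have hDw : ContDiff ℝ 1 (fderiv ℝ w) := hw.fderiv_right (by norm_num)
  have hsymm : IsSymmSndFDerivAt ℝ w x := hw.contDiffAt.isSymmSndFDerivAt (by simp)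
  have dw := (hw.differentiable two_ne_zero x).hasFDerivAt
  have dDw := (hDw.differentiable one_ne_zero x).hasFDerivAt
  refine (dw.neg.add ((dDw.clm_apply (hasFDerivAt_id x)).const_smul (1 / 2 : ℝ))).congr_fderiv ?_
  ext v
  simp only [phase, ContinuousLinearMap.comp_id, id_eq, smul_add, _root_.add_apply,
    _root_.neg_apply, _root_.smul_apply, ContinuousLinearMap.flip_apply, hsymm.eq v x]
  module

lemma fderiv_fderiv_phase (hw : ContDiff ℝ 3 w) (x : E) :
    fderiv ℝ (fderiv ℝ (phase w)) x = (1 / 2 : ℝ) • fderiv ℝ (fderiv ℝ (fderiv ℝ w)) x x := by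
  have hDw : ContDiff ℝ 2 (fderiv ℝ w) := hw.fderiv_right (by norm_num)
  have hDphase : fderiv ℝ (phase w) = phase (fderiv ℝ w) + (1 / 2 : ℝ) • fderiv ℝ w :=
    funext fun y => (hasFDerivAt_phase (hw.of_le (by norm_num)) y).fderiv
  have dDw := (hDw.differentiable two_ne_zero x).hasFDerivAt
  rw [hDphase, ((hasFDerivAt_phase hDw x).add (dDw.const_smul (1 / 2 : ℝ))).fderiv, phase]
  module

end Phase

section Hessian

variable {n : ℕ} {w : EuclideanSpace ℝ (Fin n) → ℝ}

lemma Hess_apply (u : EuclideanSpace ℝ (Fin n) → ℝ) (x : EuclideanSpace ℝ (Fin n)) (i j : Fin n) :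
    Hess n u x i j =
      fderiv ℝ (fderiv ℝ u) x (EuclideanSpace.single i 1) (EuclideanSpace.single j 1) :=
  iteratedFDeriv_two_apply u x _

lemma hasDerivAt_Hess_comp_ray (hw : ContDiff ℝ 3 w) (x : EuclideanSpace ℝ (Fin n)) (i j : Fin n) :
    HasDerivAt (fun t : ℝ => Hess n w (t • x) i j) (((2 : ℝ) • Hess n (phase w) x) i j) 1 := by
  have hDw : ContDiff ℝ 2 (fderiv ℝ w) := hw.fderiv_right (by norm_num)
  have hD2w : ContDiff ℝ 1 (fderiv ℝ (fderiv ℝ w)) := hDw.fderiv_right (by norm_num)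
  have hray := hasDerivAt_comp_ray (hD2w.differentiable one_ne_zero x)
  simp only [Hess_apply, Matrix.smul_apply, fderiv_fderiv_phase hw]
  refine ((hray.clm_apply (hasDerivAt_const _ (EuclideanSpace.single i (1 : ℝ)))).clm_apply
    (hasDerivAt_const _ (EuclideanSpace.single j (1 : ℝ)))).congr_deriv ?_
  simp

lemma trace_inv_mul_Hess_phase_of_phase_eq_log_det {κ c : ℝ} (hc : c ≠ 0) (hw : ContDiff ℝ 3 w)
    {x : EuclideanSpace ℝ (Fin n)} (hdet : (Hess n w x).det ≠ 0)
    (hdetc : (Hess n w x + c • (1 : Matrix (Fin n) (Fin n) ℝ)).det ≠ 0)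
    (heq : ∀ y, phase w y = κ / c * (log (Hess n w y).det
      - log (Hess n w y + c • (1 : Matrix (Fin n) (Fin n) ℝ)).det)) :
    κ * ((Hess n w x * (Hess n w x + c • (1 : Matrix (Fin n) (Fin n) ℝ)))⁻¹
      * Hess n (phase w) x).trace = 1 / 2 * fderiv ℝ (phase w) x x := by
  have hlhs := hasDerivAt_comp_ray
    (hasFDerivAt_phase (hw.of_le (by norm_num)) x).differentiableAt
  have hrhs := (hasDerivAt_log_det_sub_log_det_add_smul_one (hasDerivAt_Hess_comp_ray hw x)
    (by rwa [one_smul]) (by rwa [one_smul])).const_mul (κ / c)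
  simp only [← heq, one_smul, Matrix.mul_smul, Matrix.trace_smul, smul_eq_mul] at hrhs
  rw [hlhs.unique hrhs]
  field_simp

end Hessian

theorem phase_is_negative_and_satisfies_elliptic_equation_general (n : ℕ) (hn : 1 ≤ n) {κ c : ℝ}
    (hκ : 0 < κ) (hc : 0 < c)
    (w : EuclideanSpace ℝ (Fin n) → ℝ)
    (hw : ContDiff ℝ 3 w)
    (hconv : ∀ x, (Hess n w x).PosDef)
    (heq : ∀ x, κ / c * ∑ i, log (eigs (Hess n w x) i / (eigs (Hess n w x) i + c))
      = -w x + (1 / 2) * ⟪x, gradient w x⟫)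
    (φ : EuclideanSpace ℝ (Fin n) → ℝ)
    (hφ : ∀ x, φ x = -w x + (1 / 2) * ⟪x, gradient w x⟫) :
    ∀ x, φ x < 0 ∧
      κ * Matrix.trace ((Hess n w x * (Hess n w x + c • (1 : Matrix (Fin n) (Fin n) ℝ)))⁻¹
          * Hess n φ x)
        - (1 / 2) * ⟪x, gradient φ x⟫ = 0 := by
  intro x
  have hphase : φ = phase w := by
    funext y
    rw [hφ, inner_gradient_right, phase, smul_eq_mul, conj_trivial]
  constructor
  · have : Nonempty (Fin n) := ⟨⟨0, hn⟩⟩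
    rw [hφ, ← heq]
    exact mul_neg_of_pos_of_neg (div_pos hκ hc) (sum_log_div_add_neg (eigs_pos (hconv x)) hc)
  · have hlogdet : ∀ y, phase w y = κ / c * (log (Hess n w y).det
        - log (Hess n w y + c • (1 : Matrix (Fin n) (Fin n) ℝ)).det) := fun y => by
      rw [← sum_log_eigs_div_add (hconv y) hc.le, heq, ← hφ, hphase]
    have hposDef : (Hess n w x + c • (1 : Matrix (Fin n) (Fin n) ℝ)).PosDef :=
      (hconv x).add (Matrix.PosDef.one.smul hc)
    rw [inner_gradient_right, conj_trivial, hphase, sub_eq_zero]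
    exact trace_inv_mul_Hess_phase_of_phase_eq_log_det hc.ne' hw (hconv x).det_pos.ne'
      hposDef.det_pos.ne' hlogdet

theorem phase_is_negative_and_satisfies_elliptic_equation (n : ℕ) (hn : 1 ≤ n) (a b : ℝ)
    (ha : 1 < a) (hb : b = Real.sqrt (a ^ 2 - 1))
    (w : EuclideanSpace ℝ (Fin n) → ℝ)
    (hw : ContDiff ℝ (⊤ : ℕ∞) w)
    (hconv : ∀ x, (Hess n w x).PosDef)
    (heq : ∀ x, (Real.sqrt (a ^ 2 + 1) / (2 * b)) *
        ∑ i, Real.log (eigs (Hess n w x) i / (eigs (Hess n w x) i + 2 * b))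
      = -w x + (1/2) * ⟪x, gradient w x⟫)
    (φ : EuclideanSpace ℝ (Fin n) → ℝ)
    (hφ : ∀ x, φ x = -w x + (1/2) * ⟪x, gradient w x⟫) :
    ∀ x, φ x < 0 ∧
      Real.sqrt (a ^ 2 + 1) *
        Matrix.trace ((Hess n w x * (Hess n w x + (2 * b) • (1 : Matrix (Fin n) (Fin n) ℝ)))⁻¹
          * Hess n φ x)
        - (1/2) * ⟪x, gradient φ x⟫ = 0 := by
  have hb_pos : 0 < b := hb ▸ Real.sqrt_pos.2 (by nlinarith)
  exact phase_is_negative_and_satisfies_elliptic_equation_general n hn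
    (Real.sqrt_pos.2 (by positivity)) (mul_pos two_pos hb_pos) w (hw.of_le (by norm_cast))
    hconv heq φ hφ
end
end
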